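/- Let B be a finite set, M a right-angled Coxeter matrix on B, and W the associated Coxeter group with generators (r_b)_{b ∈ B}. Let V be an F_2-vector space, (λ_b)_{b ∈ B} a family of vectors of V, and λ : W → V the group homomorphism with λ(r_b) = λ_b for all b. Assume that for every clique C ⊆ B the family (λ_b)_{b ∈ C} is linearly independent in V. Then the kernel of λ is torsion-free: every element of ker λ other than the identity has infinite order. -/

import Mathlib

/-!
Every torsion element of a right-angled Coxeter group is conjugate to the product of a clique; a
homomorphism that kills no product of a nonempty clique therefore has torsion-free kernel, and
`F₂`-linear independence says exactly that clique products survive.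

Conjugate a torsion element to one, `w`, that no simple reflection can shorten by conjugation. If
`w` had no simple reflection that is both a left and a right descent, the lengths of its powers
would strictly increase. So `w ≠ 1` has such a common descent `s`; since `s` does not shorten `w`
by conjugation, `w` lies in the parabolic subgroup of the star of `s`, hence commutes with `s`. The
element `w * s` is shorter, again torsion and again cyclically reduced, and by induction it is the
product of a clique, whose members are adjacent to `s`.

Descents are controlled by walls. The set of walls separating `w` from `1`, as an `F₂`-valued
function, is a cocycle in `w`, and `s` is a left descent of `w` if and only if the wall between `1`
and `s` is in this set. Taking the wall of `s` to be the coset of the parabolic subgroup of the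
star of `s`, rather than a reflection, builds in its stabilizer from the start.
-/

namespace RightAngledCoxeter

variable {B W : Type*} [Group W] {M : CoxeterMatrix B}

/-- A Coxeter matrix is right-angled if its off-diagonal entries are `2` or `0`, where `0` stands
for `∞`. -/
def IsRightAngled (M : CoxeterMatrix B) : Prop :=
  ∀ b c : B, b ≠ c → M b c = 2 ∨ M b c = 0

/-- The commutation graph of a Coxeter matrix, whose cliques are the cliques of the matrix.
Loops are excluded by `M b b = 1`. -/
def commGraph (M : CoxeterMatrix B) : SimpleGraph B where
  Adj b c := M b c = 2
  symm := ⟨fun b c h => (M.symmetric c b).trans h⟩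
  loopless := ⟨fun b h => by simp at h⟩

/-- The closed star of a vertex in the commutation graph. -/
def star (M : CoxeterMatrix B) (b : B) : Set B := insert b ((commGraph M).neighborSet b)

theorem self_mem_star (b : B) : b ∈ star M b := Set.mem_insert _ _

theorem adj_of_mem_star {b c : B} (h : c ∈ star M b) (hcb : c ≠ b) : (commGraph M).Adj c b :=
  SimpleGraph.Adj.symm (h.resolve_left hcb)

theorem mem_star_of_adj {b c : B} (h : (commGraph M).Adj c b) : c ∈ star M b := Or.inr h.symm

variable (cs : CoxeterSystem M W)

section Parabolic

/-- The standard parabolic subgroup generated by the simple reflections indexed by `J`. -/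
def parabolic (J : Set B) : Subgroup W := Subgroup.closure (cs.simple '' J)

theorem simple_mem_parabolic {J : Set B} {b : B} (hb : b ∈ J) : cs.simple b ∈ parabolic cs J :=
  Subgroup.subset_closure ⟨b, hb, rfl⟩

theorem wordProd_mem_parabolic {J : Set B} {ω : List B} (h : ∀ b ∈ ω, b ∈ J) :
    cs.wordProd ω ∈ parabolic cs J := by
  refine Subgroup.list_prod_mem _ fun x hx => ?_
  obtain ⟨b, hb, rfl⟩ := List.mem_map.1 hx
  exact simple_mem_parabolic cs (h b hb)

theorem commute_simple_of_adj {b c : B} (h : (commGraph M).Adj b c) :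
    Commute (cs.simple b) (cs.simple c) := by
  have hpow : (cs.simple b * cs.simple c) ^ 2 = 1 := by
    simpa only [show M b c = 2 from h] using cs.simple_mul_simple_pow b c
  rw [pow_two, mul_eq_one_iff_eq_inv, mul_inv_rev, cs.inv_simple, cs.inv_simple] at hpow
  exact hpow

theorem commute_simple_of_mem_star {b c : B} (h : c ∈ star M b) :
    Commute (cs.simple c) (cs.simple b) := by
  obtain rfl | hcb := eq_or_ne c b
  · exact Commute.refl _
  · exact commute_simple_of_adj cs (adj_of_mem_star h hcb)

theorem commute_of_mem_parabolic_star {b : B} {w : W} (hw : w ∈ parabolic cs (star M b)) :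
    Commute w (cs.simple b) := by
  suffices parabolic cs (star M b) ≤ Subgroup.centralizer {cs.simple b} from
    Subgroup.mem_centralizer_singleton_iff.1 (this hw)
  rw [parabolic, Subgroup.closure_le]
  rintro _ ⟨c, hc, rfl⟩
  exact Subgroup.mem_centralizer_singleton_iff.2 (commute_simple_of_mem_star cs hc)

end Parabolic

section Walls

/-- The walls of `W`: translates of one wall for each `b : B`, with stabilizer the parabolic
subgroup of the star of `b`. -/
abbrev Wall : Type _ := Σ b : B, W ⧸ parabolic cs (star M b)

/-- The wall separating the identity from `cs.simple b`. -/
def baseWall (b : B) : Wall cs := ⟨b, ((1 : W) : W ⧸ parabolic cs (star M b))⟩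

theorem smul_baseWall_eq_iff {w : W} {b c : B} :
    w • baseWall cs b = baseWall cs c ↔ b = c ∧ w ∈ parabolic cs (star M b) := by
  have hcoset : w • ((1 : W) : W ⧸ parabolic cs (star M b)) = ((1 : W) : W ⧸ _) ↔
      w ∈ parabolic cs (star M b) := by
    rw [← MulAction.mem_stabilizer_iff, MulAction.stabilizer_quotient]
  constructor
  · intro h
    obtain rfl : b = c := congrArg Sigma.fst h
    exact ⟨rfl, hcoset.1 (eq_of_heq (Sigma.mk.inj h).2)⟩
  · rintro ⟨rfl, h⟩
    exact Sigma.ext rfl (heq_of_eq (hcoset.2 h))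

theorem simple_smul_baseWall {b c : B} (h : c ∈ star M b) :
    cs.simple c • baseWall cs b = baseWall cs b :=
  (smul_baseWall_eq_iff cs).2 ⟨rfl, simple_mem_parabolic cs h⟩

theorem simple_smul_eq_baseWall_iff {b c : B} (h : c ∈ star M b) {t : Wall cs} :
    cs.simple c • t = baseWall cs b ↔ t = baseWall cs b := by
  rw [← eq_inv_smul_iff, cs.inv_simple, simple_smul_baseWall cs h]

open scoped Classical in
/-- The action of a simple reflection on `F₂`-valued functions on walls, thought of as sets of
walls: translate, then toggle the wall that is crossed. -/
noncomputable def cross (b : B) : Function.End (Wall cs → ZMod 2) :=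
  fun φ t => φ (cs.simple b • t) + if t = baseWall cs b then 1 else 0

theorem cross_mul_self (b : B) : cross cs b * cross cs b = 1 := by
  classical
  funext φ t
  change φ (cs.simple b • cs.simple b • t) + (if cs.simple b • t = baseWall cs b then 1 else 0)
    + (if t = baseWall cs b then 1 else 0) = φ t
  simp only [simple_smul_eq_baseWall_iff cs (self_mem_star b), smul_smul,
    cs.simple_mul_simple_self, one_smul, add_assoc, CharTwo.add_self_eq_zero, add_zero]

theorem commute_cross {b c : B} (h : (commGraph M).Adj b c) :
    Commute (cross cs b) (cross cs c) := by
  classical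
  funext φ t
  change φ (cs.simple c • cs.simple b • t) + (if cs.simple b • t = baseWall cs c then 1 else 0)
    + (if t = baseWall cs b then 1 else 0) = φ (cs.simple b • cs.simple c • t)
    + (if cs.simple c • t = baseWall cs b then 1 else 0) + (if t = baseWall cs c then 1 else 0)
  simp only [simple_smul_eq_baseWall_iff cs (mem_star_of_adj h),
    simple_smul_eq_baseWall_iff cs (mem_star_of_adj h.symm), smul_smul,
    (commute_simple_of_adj cs h).eq]
  exact add_right_comm _ _ _

theorem isLiftable_cross (hM : IsRightAngled M) : M.IsLiftable (cross cs) := by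
  intro b c
  obtain rfl | hbc := eq_or_ne b c
  · rw [cross_mul_self, one_pow]
  obtain h | h := hM b c hbc
  · rw [h, (commute_cross cs h).mul_pow, pow_two, pow_two, cross_mul_self, cross_mul_self, mul_one]
  · rw [h, pow_zero]

/-- The action of `W` on sets of walls extending `cross`. It is affine over `F₂`. -/
noncomputable def crossHom (hM : IsRightAngled M) : W →* Function.End (Wall cs → ZMod 2) :=
  cs.lift ⟨cross cs, isLiftable_cross cs hM⟩

/-- The set of walls separating `w` from the identity, as an `F₂`-valued function. -/
noncomputable def separation (hM : IsRightAngled M) (w : W) : Wall cs → ZMod 2 :=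
  crossHom cs hM w 0

variable (hM : IsRightAngled M)

theorem separation_one : separation cs hM 1 = 0 := by
  rw [separation, map_one]
  rfl

theorem crossHom_simple_mul (b : B) (w : W) (φ : Wall cs → ZMod 2) :
    crossHom cs hM (cs.simple b * w) φ = cross cs b (crossHom cs hM w φ) := by
  rw [crossHom, map_mul, cs.lift_apply_simple]
  rfl

open scoped Classical in
theorem separation_simple (b : B) (t : Wall cs) :
    separation cs hM (cs.simple b) t = if t = baseWall cs b then 1 else 0 := by
  rw [separation, crossHom, cs.lift_apply_simple]
  exact zero_add _

theorem crossHom_apply (w : W) (φ : Wall cs → ZMod 2) (t : Wall cs) :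
    crossHom cs hM w φ t = separation cs hM w t + φ (w⁻¹ • t) := by
  induction w using cs.simple_induction_left generalizing t with
  | one =>
    rw [separation_one, Pi.zero_apply, zero_add, inv_one, one_smul, map_one]
    rfl
  | mul_simple_left w b ih =>
    rw [separation, crossHom_simple_mul, crossHom_simple_mul, cross, cross, ih,
      ← separation, add_right_comm, mul_inv_rev, cs.inv_simple, mul_smul]

theorem separation_mul (u v : W) (t : Wall cs) :
    separation cs hM (u * v) t = separation cs hM u t + separation cs hM v (u⁻¹ • t) := by
  rw [separation, map_mul]
  exact crossHom_apply cs hM u _ t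

theorem separation_inv (w : W) (t : Wall cs) :
    separation cs hM w⁻¹ t = separation cs hM w (w • t) := by
  have h := separation_mul cs hM w⁻¹ w t
  rw [inv_mul_cancel, separation_one, inv_inv] at h
  exact CharTwo.add_eq_zero.1 h.symm

theorem fst_mem_of_separation_ne_zero {J : Set B} {w : W} (hw : w ∈ parabolic cs J)
    {t : Wall cs} (ht : separation cs hM w t ≠ 0) : t.1 ∈ J := by
  classical
  induction hw using Subgroup.closure_induction generalizing t with
  | mem x hx =>
    obtain ⟨b, hb, rfl⟩ := hx
    rw [separation_simple, ite_ne_right_iff] at ht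
    rwa [ht.1]
  | one => exact absurd (congrFun (separation_one cs hM) t) ht
  | mul u v _ _ hu hv =>
    by_cases hut : separation cs hM u t = 0
    · rw [separation_mul, hut, zero_add] at ht
      exact hv (t := u⁻¹ • t) ht
    · exact hu hut
  | inv u _ hu => exact hu (t := u • t) (separation_inv cs hM u t ▸ ht)

theorem exists_split_of_separation_ne_zero {ω : List B} {t : Wall cs}
    (h : separation cs hM (cs.wordProd ω) t ≠ 0) :
    ∃ α b β, ω = α ++ b :: β ∧ t = cs.wordProd α • baseWall cs b := by
  induction ω generalizing t with
  | nil => exact absurd (by rw [cs.wordProd_nil, separation_one, Pi.zero_apply]) h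
  | cons c ω ih =>
    by_cases ht : t = baseWall cs c
    · exact ⟨[], c, ω, rfl, by rwa [cs.wordProd_nil, one_smul]⟩
    · rw [cs.wordProd_cons, separation_mul, separation_simple, if_neg ht, zero_add] at h
      obtain ⟨α, b, β, rfl, hα⟩ := ih h
      exact ⟨c :: α, b, β, rfl, by rw [cs.wordProd_cons, mul_smul, ← hα, smul_inv_smul]⟩

theorem exists_split_of_separation_baseWall_ne_zero {ω : List B} {s : B}
    (h : separation cs hM (cs.wordProd ω) (baseWall cs s) ≠ 0) :
    ∃ α β, ω = α ++ s :: β ∧ cs.wordProd α ∈ parabolic cs (star M s) := by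
  obtain ⟨α, b, β, rfl, hα⟩ := exists_split_of_separation_ne_zero cs hM h
  obtain ⟨rfl, hmem⟩ := (smul_baseWall_eq_iff cs).1 hα.symm
  exact ⟨α, β, rfl, hmem⟩

end Walls

section Descents

theorem isLeftDescent_of_isReduced_split {α β : List B} {s : B}
    (hred : cs.IsReduced (α ++ s :: β)) (hα : cs.wordProd α ∈ parabolic cs (star M s)) :
    cs.IsLeftDescent (cs.wordProd (α ++ s :: β)) s := by
  have hdelete : cs.simple s * cs.wordProd (α ++ s :: β) = cs.wordProd (α ++ β) := by
    rw [cs.wordProd_append, cs.wordProd_append, cs.wordProd_cons, ← mul_assoc, ← mul_assoc,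
      ← (commute_of_mem_parabolic_star cs hα).eq, cs.simple_mul_simple_cancel_right]
  calc cs.length (cs.simple s * cs.wordProd (α ++ s :: β))
      ≤ (α ++ β).length := hdelete ▸ cs.length_wordProd_le (α ++ β)
    _ < (α ++ s :: β).length := by simp
    _ = cs.length (cs.wordProd (α ++ s :: β)) := hred.symm

variable (hM : IsRightAngled M)

theorem isLeftDescent_iff_separation_ne_zero {w : W} {s : B} :
    cs.IsLeftDescent w s ↔ separation cs hM w (baseWall cs s) ≠ 0 := by
  have of_ne_zero {w : W} (h : separation cs hM w (baseWall cs s) ≠ 0) :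
      cs.IsLeftDescent w s := by
    obtain ⟨ω, hω, rfl⟩ := cs.exists_isReduced w
    obtain ⟨α, β, rfl, hα⟩ := exists_split_of_separation_baseWall_ne_zero cs hM h
    exact isLeftDescent_of_isReduced_split cs hω hα
  refine ⟨fun h hzero => ?_, of_ne_zero⟩
  refine cs.isLeftDescent_iff_not_isLeftDescent_mul.1 h (of_ne_zero ?_)
  rw [separation_mul, separation_simple, cs.inv_simple, simple_smul_baseWall cs (self_mem_star s),
    hzero, if_pos rfl, add_zero]
  exact one_ne_zero

include hM

theorem isLeftDescent_simple_mul_iff {w : W} {r s : B} (h : (commGraph M).Adj r s) :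
    cs.IsLeftDescent (cs.simple r * w) s ↔ cs.IsLeftDescent w s := by
  have hne : baseWall cs s ≠ baseWall cs r := fun he => h.ne' (congrArg Sigma.fst he)
  rw [isLeftDescent_iff_separation_ne_zero cs hM, isLeftDescent_iff_separation_ne_zero cs hM,
    separation_mul, separation_simple, if_neg hne, zero_add, cs.inv_simple,
    simple_smul_baseWall cs (mem_star_of_adj h)]

theorem isRightDescent_mul_simple_iff {w : W} {r s : B} (h : (commGraph M).Adj r s) :
    cs.IsRightDescent (w * cs.simple r) s ↔ cs.IsRightDescent w s := by
  rw [← cs.isLeftDescent_inv_iff, mul_inv_rev, cs.inv_simple, isLeftDescent_simple_mul_iff cs hM h,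
    cs.isLeftDescent_inv_iff]

theorem mem_of_isLeftDescent_of_mem_parabolic {J : Set B} {w : W} {s : B}
    (hw : w ∈ parabolic cs J) (hs : cs.IsLeftDescent w s) : s ∈ J :=
  fst_mem_of_separation_ne_zero cs hM hw ((isLeftDescent_iff_separation_ne_zero cs hM).1 hs)

theorem forall_mem_of_wordProd_mem_parabolic {J : Set B} {ω : List B} (hω : cs.IsReduced ω)
    (h : cs.wordProd ω ∈ parabolic cs J) : ∀ b ∈ ω, b ∈ J := by
  induction ω with
  | nil => simp
  | cons c ω ih =>
    have hdesc : cs.IsLeftDescent (cs.wordProd (c :: ω)) c :=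
      isLeftDescent_of_isReduced_split cs (α := []) hω (one_mem _)
    have hc : c ∈ J := mem_of_isLeftDescent_of_mem_parabolic cs hM h hdesc
    rw [cs.wordProd_cons, Subgroup.mul_mem_cancel_left _ (simple_mem_parabolic cs hc)] at h
    exact List.forall_mem_cons.2 ⟨hc, ih (hω.drop 1) h⟩

theorem exists_split_of_isLeftDescent {ω : List B} {s : B} (hω : cs.IsReduced ω)
    (hs : cs.IsLeftDescent (cs.wordProd ω) s) :
    ∃ α β, ω = α ++ s :: β ∧ ∀ b ∈ α, b ∈ star M s := by
  obtain ⟨α, β, rfl, hα⟩ := exists_split_of_separation_baseWall_ne_zero cs hM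
    ((isLeftDescent_iff_separation_ne_zero cs hM).1 hs)
  have hred : cs.IsReduced α := by simpa using hω.take α.length
  exact ⟨α, β, rfl, forall_mem_of_wordProd_mem_parabolic cs hM hred hα⟩

theorem adj_of_isLeftDescent {w : W} {r s : B} (hrs : r ≠ s)
    (hr : cs.IsLeftDescent w r) (hs : cs.IsLeftDescent w s) : (commGraph M).Adj r s := by
  obtain ⟨ω, hω, hrw⟩ := cs.exists_isReduced (cs.simple r * w)
  obtain rfl : w = cs.wordProd (r :: ω) := by
    rw [cs.wordProd_cons, ← hrw, cs.simple_mul_simple_cancel_left]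
  have hred : cs.IsReduced (r :: ω) := by
    rw [CoxeterSystem.IsReduced, ← cs.isLeftDescent_iff.1 hr, hrw, hω.eq, List.length_cons]
  obtain ⟨α, β, hsplit, hα⟩ := exists_split_of_isLeftDescent cs hM hred hs
  cases α with
  | nil => exact absurd (List.cons.inj hsplit).1 hrs
  | cons c α =>
    obtain rfl := (List.cons.inj hsplit).1
    exact adj_of_mem_star (hα r List.mem_cons_self) hrs

theorem length_mul_eq_add {u v : W} (h : ∀ s, cs.IsRightDescent u s → ¬ cs.IsLeftDescent v s) :
    cs.length (u * v) = cs.length u + cs.length v := by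
  induction hn : cs.length u generalizing u v with
  | zero => rw [cs.length_eq_zero_iff.1 hn, one_mul, zero_add]
  | succ n ih =>
    obtain ⟨s, hs⟩ := cs.exists_rightDescent_of_ne_one (w := u) fun hu => by simp [hu] at hn
    have hu := cs.isRightDescent_iff.1 hs
    have hv := cs.not_isLeftDescent_iff.1 (h s hs)
    -- Moving `s` from `u` to `v` keeps the hypothesis: a common descent would be adjacent to `s`.
    have hdisj (r : B) (hr : cs.IsRightDescent (u * cs.simple s) r) :
        ¬ cs.IsLeftDescent (cs.simple s * v) r := by
      intro hrv
      have hsr : s ≠ r := by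
        rintro rfl
        exact cs.isRightDescent_iff_not_isRightDescent_mul.1 hs hr
      have hsv : cs.IsLeftDescent (cs.simple s * v) s := by
        rw [cs.isLeftDescent_iff_not_isLeftDescent_mul, cs.simple_mul_simple_cancel_left]
        exact h s hs
      have hadj := adj_of_isLeftDescent cs hM hsr hsv hrv
      exact h r ((isRightDescent_mul_simple_iff cs hM hadj).1 hr)
        ((isLeftDescent_simple_mul_iff cs hM hadj).1 hrv)
    have hlen := ih hdisj (by lia)
    rw [mul_assoc, cs.simple_mul_simple_cancel_left] at hlen
    lia

theorem mem_parabolic_star_of_isLeftDescent_mul {u v : W} {s : B}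
    (hlen : cs.length (u * v) = cs.length u + cs.length v) (hs : cs.IsLeftDescent (u * v) s)
    (hu : ¬ cs.IsLeftDescent u s) : u ∈ parabolic cs (star M s) := by
  obtain ⟨ω, hω, rfl⟩ := cs.exists_isReduced u
  obtain ⟨ω', hω', rfl⟩ := cs.exists_isReduced v
  rw [← cs.wordProd_append] at hs hlen
  have hred : cs.IsReduced (ω ++ ω') := by
    rw [CoxeterSystem.IsReduced, hlen, hω.eq, hω'.eq, List.length_append]
  obtain ⟨α, β, hsplit, hα⟩ := exists_split_of_isLeftDescent cs hM hred hs
  rcases List.append_eq_append_iff.1 hsplit with ⟨γ, rfl, -⟩ | ⟨γ, rfl, hγ⟩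
  · exact wordProd_mem_parabolic cs fun b hb => hα b (List.mem_append_left _ hb)
  · cases γ with
    | nil => exact wordProd_mem_parabolic cs (by simpa using hα)
    | cons c γ =>
      obtain rfl := (List.cons.inj hγ).1
      exact absurd (isLeftDescent_of_isReduced_split cs hω (wordProd_mem_parabolic cs hα)) hu

end Descents

section Torsion

variable (hM : IsRightAngled M)
include hM

theorem length_pow_succ {w : W} (h : ∀ s, cs.IsRightDescent w s → ¬ cs.IsLeftDescent w s)
    (n : ℕ) : cs.length (w ^ (n + 1)) = cs.length w + cs.length (w ^ n) := by
  induction n with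
  | zero => simp
  | succ n ih =>
    rw [pow_succ' w (n + 1)]
    refine length_mul_eq_add cs hM fun s hs hsn => h s hs ?_
    rw [pow_succ'] at hsn ih
    have hw := mem_parabolic_star_of_isLeftDescent_mul cs hM ih hsn (h s hs)
    rwa [CoxeterSystem.IsLeftDescent, ← (commute_of_mem_parabolic_star cs hw).eq]

theorem exists_common_descent_of_isOfFinOrder {w : W} (hw : IsOfFinOrder w) (hw1 : w ≠ 1) :
    ∃ s, cs.IsRightDescent w s ∧ cs.IsLeftDescent w s := by
  by_contra! h
  have hpos : 0 < cs.length w := Nat.pos_of_ne_zero (mt cs.length_eq_zero_iff.1 hw1)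
  have hmono : StrictMono fun n : ℕ => cs.length (w ^ n) :=
    strictMono_nat_of_lt_succ fun n => by
      rw [length_pow_succ cs hM h]
      lia
  have hinj : Function.Injective (w ^ · : ℕ → W) :=
    hmono.injective.of_comp (f := cs.length)
  exact injective_pow_iff_not_isOfFinOrder.1 hinj hw

end Torsion

section Clique

theorem pairwise_commute_simple {C : Set B} (hC : (commGraph M).IsClique C) :
    C.Pairwise (Function.onFun Commute cs.simple) :=
  hC.mono' fun _ _ => commute_simple_of_adj cs

/-- The product of the pairwise commuting simple reflections indexed by a finite clique. -/
def cliqueProd {C : Finset B} (hC : (commGraph M).IsClique C) : W :=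
  C.noncommProd cs.simple (pairwise_commute_simple cs hC)

theorem cliqueProd_insert [DecidableEq B] {C : Finset B} {s : B} (hs : s ∉ C)
    (hC : (commGraph M).IsClique C)
    (hsC : (commGraph M).IsClique (insert s C : Finset B)) :
    cliqueProd cs hsC = cs.simple s * cliqueProd cs hC :=
  Finset.noncommProd_insert_of_notMem _ _ _ _ hs

theorem map_cliqueProd {A : Type*} [CommMonoid A] (f : W →* A) {C : Finset B}
    (hC : (commGraph M).IsClique C) : f (cliqueProd cs hC) = ∏ b ∈ C, f (cs.simple b) := by
  rw [cliqueProd, Finset.map_noncommProd, Finset.noncommProd_eq_prod]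

/-- An element is cyclically reduced if conjugation by a simple reflection never shortens it. -/
def IsCyclicallyReduced (w : W) : Prop :=
  ∀ s, cs.length w ≤ cs.length (cs.simple s * w * cs.simple s)

theorem exists_isConj_isCyclicallyReduced (w : W) :
    ∃ v, IsConj w v ∧ IsCyclicallyReduced cs v := by
  obtain ⟨v, hv, hmin⟩ := exists_minimalFor_of_wellFoundedLT (IsConj w) cs.length ⟨w, .refl w⟩
  refine ⟨v, hv, fun s => not_lt.1 fun hlt => hlt.not_ge (hmin (hv.trans ?_) hlt.le)⟩
  exact isConj_iff.2 ⟨cs.simple s, by rw [cs.inv_simple]⟩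

variable {cs}

theorem IsCyclicallyReduced.not_isLeftDescent_mul_simple {w : W} {s : B}
    (hw : IsCyclicallyReduced cs w) (hs : cs.IsRightDescent w s) :
    ¬ cs.IsLeftDescent (w * cs.simple s) s := fun h => by
  have hlt : cs.length (cs.simple s * w * cs.simple s) < cs.length w := by
    rw [mul_assoc]
    exact h.trans hs
  exact hlt.not_ge (hw s)

variable (hM : IsRightAngled M)
include hM

theorem IsCyclicallyReduced.mem_parabolic_star {w : W} {s : B} (hw : IsCyclicallyReduced cs w)
    (hr : cs.IsRightDescent w s) (hl : cs.IsLeftDescent w s) : w ∈ parabolic cs (star M s) := by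
  have hws : w * cs.simple s ∈ parabolic cs (star M s) := by
    refine mem_parabolic_star_of_isLeftDescent_mul cs hM (v := cs.simple s) ?_ ?_
      (hw.not_isLeftDescent_mul_simple hr)
    · rw [cs.simple_mul_simple_cancel_right, cs.length_simple, cs.isRightDescent_iff.1 hr]
    · rwa [cs.simple_mul_simple_cancel_right]
  exact (Subgroup.mul_mem_cancel_right _ (simple_mem_parabolic cs (self_mem_star s))).1 hws

theorem IsCyclicallyReduced.mul_simple {w : W} {s : B} (hw : IsCyclicallyReduced cs w)
    (hr : cs.IsRightDescent w s) (hstar : w ∈ parabolic cs (star M s)) :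
    IsCyclicallyReduced cs (w * cs.simple s) := by
  intro r
  by_contra! hlt
  have hrv : cs.IsLeftDescent (w * cs.simple s) r := by
    by_contra hrv
    have hup := cs.not_isLeftDescent_iff.1 hrv
    have hdown := cs.length_mul_simple (cs.simple r * (w * cs.simple s)) r
    lia
  have hrs : Commute (cs.simple r) (cs.simple s) := commute_simple_of_mem_star cs <|
    mem_of_isLeftDescent_of_mem_parabolic cs hM
      (mul_mem hstar (simple_mem_parabolic cs (self_mem_star s))) hrv
  have hconj : cs.simple r * w * cs.simple r =
      cs.simple r * (w * cs.simple s) * cs.simple r * cs.simple s := by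
    rw [mul_assoc _ (cs.simple r) (cs.simple s), hrs.eq, mul_assoc _ (w * _), ← mul_assoc (w * _),
      cs.simple_mul_simple_cancel_right, mul_assoc]
  have hlong := cs.length_mul_le (cs.simple r * (w * cs.simple s) * cs.simple r) (cs.simple s)
  rw [← hconj, cs.length_simple] at hlong
  have hw_le := hw r
  have hw_len := cs.isRightDescent_iff.1 hr
  lia

theorem IsCyclicallyReduced.exists_eq_cliqueProd {w : W} (hred : IsCyclicallyReduced cs w)
    (hw : IsOfFinOrder w) :
    ∃ (C : Finset B) (hC : (commGraph M).IsClique C),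
      w = cliqueProd cs hC ∧ ∀ b ∈ C, cs.IsLeftDescent w b := by
  classical
  induction hn : cs.length w using Nat.strong_induction_on generalizing w with
  | h n ih =>
    subst hn
    obtain rfl | hw1 := eq_or_ne w 1
    · exact ⟨∅, by simp, rfl, by simp⟩
    obtain ⟨s, hr, hl⟩ := exists_common_descent_of_isOfFinOrder cs hM hw hw1
    have hstar := hred.mem_parabolic_star hM hr hl
    have hcomm := commute_of_mem_parabolic_star cs hstar
    have hfin : IsOfFinOrder (w * cs.simple s) :=
      hcomm.isOfFinOrder_mul hw (isOfFinOrder_iff_pow_eq_one.2 ⟨2, two_pos, cs.simple_sq s⟩)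
    obtain ⟨C, hC, hprod, hdesc⟩ := ih _ hr (hred.mul_simple hM hr hstar) hfin rfl
    have hsC : s ∉ C := fun h => hred.not_isLeftDescent_mul_simple hr (hdesc s h)
    have hadj (b : B) (hb : b ∈ C) : (commGraph M).Adj s b := by
      have hb_star : b ∈ star M s := mem_of_isLeftDescent_of_mem_parabolic cs hM
        (mul_mem hstar (simple_mem_parabolic cs (self_mem_star s))) (hdesc b hb)
      exact (adj_of_mem_star hb_star (ne_of_mem_of_not_mem hb hsC)).symm
    have hw_eq : w = cs.simple s * (w * cs.simple s) := by
      rw [hcomm.eq, cs.simple_mul_simple_cancel_left]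
    have hsC_clique : (commGraph M).IsClique (insert s C : Finset B) := by
      rw [Finset.coe_insert]
      exact hC.insert fun b hb _ => hadj b hb
    refine ⟨insert s C, hsC_clique, ?_, Finset.forall_mem_insert _ _ _ |>.2 ⟨hl, fun b hb => ?_⟩⟩
    · rw [cliqueProd_insert cs hsC hC hsC_clique, ← hprod, ← hw_eq]
    · rw [hw_eq]
      exact (isLeftDescent_simple_mul_iff cs hM (hadj b hb)).2 (hdesc b hb)

variable (cs) in
theorem exists_isConj_cliqueProd_of_isOfFinOrder {w : W} (hw : IsOfFinOrder w) :
    ∃ (C : Finset B) (hC : (commGraph M).IsClique C), IsConj w (cliqueProd cs hC) := by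
  obtain ⟨v, hwv, hred⟩ := exists_isConj_isCyclicallyReduced cs w
  obtain ⟨C, hC, rfl, -⟩ := hred.exists_eq_cliqueProd hM (hwv.isOfFinOrder hw)
  exact ⟨C, hC, hwv⟩

end Clique

theorem eq_empty_of_linearIndepOn_of_sum_eq_zero {R V ι : Type*} [Ring R] [Nontrivial R]
    [AddCommGroup V] [Module R V] {v : ι → V} {C : Finset ι} (hv : LinearIndepOn R v (C : Set ι))
    (hsum : ∑ i ∈ C, v i = 0) : C = ∅ :=
  Finset.eq_empty_of_forall_notMem fun i hi => one_ne_zero <|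
    linearIndepOn_finset_iff.1 hv (fun _ => (1 : R)) (by simpa only [one_smul] using hsum) i hi

theorem eq_empty_of_cliqueProd_mem_ker {R V : Type*} [Ring R] [Nontrivial R] [AddCommGroup V]
    [Module R V] {v : B → V} {f : W →* Multiplicative V}
    (hf : ∀ b, f (cs.simple b) = Multiplicative.ofAdd (v b)) {C : Finset B}
    (hC : (commGraph M).IsClique C) (hv : LinearIndepOn R v (C : Set B))
    (hker : cliqueProd cs hC ∈ f.ker) : C = ∅ := by
  refine eq_empty_of_linearIndepOn_of_sum_eq_zero hv (Multiplicative.ofAdd.injective ?_)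
  calc Multiplicative.ofAdd (∑ b ∈ C, v b)
      = ∏ b ∈ C, f (cs.simple b) := by simp only [ofAdd_sum, hf]
    _ = f (cliqueProd cs hC) := (map_cliqueProd cs f hC).symm
    _ = Multiplicative.ofAdd 0 := MonoidHom.mem_ker.1 hker

end RightAngledCoxeter

theorem coxeter_colouring_ker_torsionFree_general
    {B : Type*} {M : CoxeterMatrix B} (hM : RightAngledCoxeter.IsRightAngled M)
    {W : Type*} [Group W] (cs : CoxeterSystem M W) {G : Type*} [Group G] (f : W →* G)
    (hf : ∀ (C : Finset B) (hC : (RightAngledCoxeter.commGraph M).IsClique C),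
      RightAngledCoxeter.cliqueProd cs hC ∈ f.ker → C = ∅) :
    ∀ w : W, w ∈ f.ker → w ≠ 1 → ¬ IsOfFinOrder w := by
  intro w hw hw1 hfin
  obtain ⟨C, hC, hconj⟩ :=
    RightAngledCoxeter.exists_isConj_cliqueProd_of_isOfFinOrder cs hM hfin
  have hker : RightAngledCoxeter.cliqueProd cs hC ∈ f.ker := by
    obtain ⟨g, hg⟩ := isConj_iff.1 hconj
    exact hg ▸ f.normal_ker.conj_mem w hw g
  obtain rfl := hf C hC hker
  exact hw1 (isConj_one_left.1 hconj)

/-- Let `B` be a finite set, `M` a right-angled Coxeter matrix on `B`,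
`W` the associated Coxeter group with simple generators `cs.simple b`. Let `V` be an
`F₂`-vector space, `lam : B → V` a family of vectors, and `l : W →* Multiplicative V`
the homomorphism with `l (cs.simple b) = lam b` for all `b`. Assume that for every
clique `C ⊆ B` (with `b ≠ b'` adjacent iff `M b b' = 2`) the family `(lam b)_{b ∈ C}`
is linearly independent. Then `ker l` is torsion-free: every element of the kernel
other than the identity has infinite order. -/
theorem coxeter_colouring_ker_torsionFree
    {B : Type*} [Finite B] (M : CoxeterMatrix B)
    (hM : ∀ b b' : B, b ≠ b' → M b b' = 2 ∨ M b b' = 0)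
    {W : Type*} [Group W] (cs : CoxeterSystem M W)
    (V : Type*) [AddCommGroup V] [Module (ZMod 2) V]
    (lam : B → V)
    (l : W →* Multiplicative V)
    (hl : ∀ b : B, l (cs.simple b) = Multiplicative.ofAdd (lam b))
    (hind : ∀ C : Set B, (∀ b ∈ C, ∀ b' ∈ C, b ≠ b' → M b b' = 2) →
      LinearIndependent (ZMod 2) (fun b : C => lam b)) :
    ∀ w : W, w ∈ l.ker → w ≠ 1 → ¬ IsOfFinOrder w :=
  coxeter_colouring_ker_torsionFree_general hM cs l fun C hC =>
    RightAngledCoxeter.eq_empty_of_cliqueProd_mem_ker cs hl hC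
      (hind C fun _ hb _ hb' hne => hC hb hb' hne)
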